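/- arXiv:1808.00627 — 2 statements merged into one kernel-verified Lean document; each statement's English description precedes it below -/
import Mathlib

section
/- Under the block setup and outer setup, let r ≥ 0, Ǎ = [[A, Bᵀ],[B, −r·S_0 − Q]] and H_0^{−1} = diag(A, S_0 + Q). Suppose (v, w) ∈ R^N × R^n is nonzero, Ǎ·(v,w) = μ·H_0^{−1}·(v,w) for a real number μ ≠ 1, and w satisfies the orthogonality conditions e_sᵀ M_s w_s = 0 for all s ∈ {1,…,m}. Then μ² + (r−1)μ − (1+r) = 0; that is, μ = ((1−r) − √((1−r)² + 4(1+r)))/2 or μ = ((1−r) + √((1−r)² + 4(1+r)))/2. -/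
open Matrix

/-- The all-ones vector `e` in `ℝ^k`. -/
noncomputable def onesV (k : ℕ) : Fin k → ℝ := fun _ => 1

/-- The rank-one block `Q_s = (1/d_s²) (M_s e_s)(M_s e_s)ᵀ`, where `d_s² = e_sᵀ M_s e_s`. -/
noncomputable def Qblk {k : ℕ} (M : Matrix (Fin k) (Fin k) ℝ) : Matrix (Fin k) (Fin k) ℝ :=
  (onesV k ⬝ᵥ M.mulVec (onesV k))⁻¹ • vecMulVec (M.mulVec (onesV k)) (M.mulVec (onesV k))

/-!
With `S₀ = B A⁻¹ Bᴴ` and `Q w = 0`, the two block rows of the eigenvalue equation read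
`Bᴴ w = (μ - 1) A v` and `B v = (r + μ) S₀ w`. Applying `B A⁻¹` to the first and substituting the
second gives `S₀ w = (μ - 1) (r + μ) S₀ w`, so the quadratic follows once `S₀ w ≠ 0`. If `S₀ w = 0`,
then `Bᴴ w = 0` because `A⁻¹` is definite; hence each block of `w` is a multiple of the kernel
vector `e_s`, the orthogonality conditions force `w = 0`, and the first row leaves
`(μ - 1) A v = 0`, that is `v = 0`.
-/

section BlockDiagonal

variable {R ι : Type*} {κ ν : ι → Type*} [DecidableEq ι] [Fintype ι] [∀ s, Fintype (ν s)]

lemma blockDiagonal'_mulVec_apply [NonUnitalNonAssocSemiring R] (C : ∀ s, Matrix (κ s) (ν s) R)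
    (w : (Σ s, ν s) → R) (s : ι) (i : κ s) :
    (blockDiagonal' C *ᵥ w) ⟨s, i⟩ = (C s *ᵥ fun j => w ⟨s, j⟩) i := by
  simp only [mulVec, dotProduct, Fintype.sum_sigma]
  rw [Fintype.sum_eq_single s fun t hts => Finset.sum_eq_zero fun j _ => by
    rw [blockDiagonal'_apply_ne C i j hts.symm, zero_mul]]
  simp only [blockDiagonal'_apply_eq]

lemma blockDiagonal'_mulVec_eq_zero_iff [NonUnitalNonAssocSemiring R]
    (C : ∀ s, Matrix (κ s) (ν s) R) (w : (Σ s, ν s) → R) :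
    blockDiagonal' C *ᵥ w = 0 ↔ ∀ s, C s *ᵥ (fun j => w ⟨s, j⟩) = 0 := by
  simp only [funext_iff, Sigma.forall, blockDiagonal'_mulVec_apply, Pi.zero_apply]

end BlockDiagonal

section Orthogonality

variable {K n : Type*} [Fintype n]

lemma star_mulVec_dotProduct_of_isHermitian [NonUnitalSemiring K] [StarRing K] {M : Matrix n n K}
    (hM : M.IsHermitian) (x y : n → K) : star (M *ᵥ x) ⬝ᵥ y = star x ⬝ᵥ M *ᵥ y := by
  rw [star_mulVec, hM.eq, dotProduct_mulVec]

lemma eq_zero_of_mem_span_singleton_of_dotProduct_eq_zero [CommSemiring K] [NoZeroDivisors K]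
    {e p x : n → K} (hpe : p ⬝ᵥ e ≠ 0) (hx : x ∈ Submodule.span K {e}) (hpx : p ⬝ᵥ x = 0) :
    x = 0 := by
  obtain ⟨c, rfl⟩ := Submodule.mem_span_singleton.mp hx
  rw [dotProduct_smul, smul_eq_mul] at hpx
  rw [(mul_eq_zero.mp hpx).resolve_right hpe, zero_smul]

end Orthogonality

section Pencil

variable {K m n : Type*} [Fintype m] [Fintype n]

lemma fromBlocks_mulVec_elim_eq_smul_iff [CommRing K] {A : Matrix m m K} {C : Matrix m n K}
    {B : Matrix n m K} {S Q : Matrix n n K} {r μ : K} {v : m → K} {w : n → K} (hQw : Q *ᵥ w = 0) :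
    fromBlocks A C B (-(r • S) - Q) *ᵥ Sum.elim v w =
        μ • fromBlocks A 0 0 (S + Q) *ᵥ Sum.elim v w ↔
      C *ᵥ w = (μ - 1) • A *ᵥ v ∧ B *ᵥ v = (r + μ) • S *ᵥ w := by
  have hsmul (x : m → K) (y : n → K) : μ • Sum.elim x y = Sum.elim (μ • x) (μ • y) := by
    ext (i | i) <;> rfl
  simp only [fromBlocks_mulVec, Sum.elim_comp_inl, Sum.elim_comp_inr, sub_mulVec, neg_mulVec,
    add_mulVec, smul_mulVec, zero_mulVec, hQw, sub_zero, add_zero, zero_add, hsmul,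
    Sum.elim_eq_iff, sub_smul, one_smul, add_smul]
  rw [eq_sub_iff_add_eq', add_comm (r • _), ← sub_eq_iff_eq_add, sub_eq_add_neg]

lemma conjTranspose_mulVec_eq_zero_of_posDef [Ring K] [PartialOrder K] [StarRing K]
    {P : Matrix m m K} (hP : P.PosDef) {B : Matrix n m K} {w : n → K}
    (hw : (B * P * Bᴴ) *ᵥ w = 0) : Bᴴ *ᵥ w = 0 := by
  by_contra hne
  have hpos := hP.dotProduct_mulVec_pos hne
  have hform : star (Bᴴ *ᵥ w) ⬝ᵥ P *ᵥ Bᴴ *ᵥ w = star w ⬝ᵥ (B * P * Bᴴ) *ᵥ w := by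
    rw [star_mulVec, conjTranspose_conjTranspose, ← dotProduct_mulVec, mulVec_mulVec,
      mulVec_mulVec, Matrix.mul_assoc]
  rw [hform, hw, dotProduct_zero] at hpos
  exact hpos.false

variable [DecidableEq m]

lemma schur_mulVec_eq_smul [CommRing K] {A : Matrix m m K} (hA : IsUnit A) {C : Matrix m n K}
    (B : Matrix n m K) {c : K} {v : m → K} {w : n → K} (hC : C *ᵥ w = c • A *ᵥ v) :
    (B * A⁻¹ * C) *ᵥ w = c • B *ᵥ v := by
  have hdet : IsUnit A.det := (isUnit_iff_isUnit_det A).mp hA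
  rw [← mulVec_mulVec, hC, mulVec_smul, mulVec_mulVec, nonsing_inv_mul_cancel_right _ _ hdet]

lemma sq_add_mul_sub_eq_zero_of_schur_mulVec_ne_zero [CommRing K] [NoZeroDivisors K]
    {A : Matrix m m K} (hA : IsUnit A) {C : Matrix m n K} {B : Matrix n m K} {r μ : K}
    {v : m → K} {w : n → K} (hC : C *ᵥ w = (μ - 1) • A *ᵥ v)
    (hB : B *ᵥ v = (r + μ) • (B * A⁻¹ * C) *ᵥ w) (hw : (B * A⁻¹ * C) *ᵥ w ≠ 0) :
    μ ^ 2 + (r - 1) * μ - (1 + r) = 0 := by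
  have hfix : (B * A⁻¹ * C) *ᵥ w = ((μ - 1) * (r + μ)) • (B * A⁻¹ * C) *ᵥ w := by
    rw [mul_smul, ← hB, schur_mulVec_eq_smul hA B hC]
  obtain ⟨i, hi⟩ := Function.ne_iff.mp hw
  have hi_fix : ((B * A⁻¹ * C) *ᵥ w) i = (μ - 1) * (r + μ) * ((B * A⁻¹ * C) *ᵥ w) i :=
    congrFun hfix i
  refine (mul_eq_zero.mp ?_).resolve_right hi
  linear_combination -hi_fix

lemma schur_mulVec_ne_zero_of_posDef [Field K] [PartialOrder K] [StarRing K] {A : Matrix m m K}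
    (hA : A.PosDef) {B : Matrix n m K} {c : K} (hc : c ≠ 0) {v : m → K} {w : n → K}
    (hvw : Sum.elim v w ≠ 0) (hBv : Bᴴ *ᵥ w = c • A *ᵥ v) (hBw : Bᴴ *ᵥ w = 0 → w = 0) :
    (B * A⁻¹ * Bᴴ) *ᵥ w ≠ 0 := by
  intro hSw
  have hBw_zero : Bᴴ *ᵥ w = 0 := conjTranspose_mulVec_eq_zero_of_posDef hA.inv hSw
  have hAv : A *ᵥ v = 0 := (smul_eq_zero.mp (hBv.symm.trans hBw_zero)).resolve_left hc
  have hv : v = 0 := mulVec_injective_of_isUnit hA.isUnit (hAv.trans (mulVec_zero A).symm)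
  exact hvw (by rw [hv, hBw hBw_zero, Sum.elim_zero_zero])

end Pencil

section BlockPencil

variable {K ι ν : Type*} {κ τ : ι → Type*} [Fintype ι] [DecidableEq ι] [∀ s, Fintype (κ s)]

lemma eq_zero_of_conjTranspose_fromCols_mulVec_eq_zero [CommRing K] [NoZeroDivisors K]
    [StarRing K] {D : ∀ s, Matrix (κ s) (τ s) K} {e p : ∀ s, κ s → K}
    (hker : ∀ s, LinearMap.ker (D s)ᴴ.mulVecLin ≤ Submodule.span K {e s})
    (hpe : ∀ s, p s ⬝ᵥ e s ≠ 0) {w : (Σ s, κ s) → K}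
    (hpw : ∀ s, p s ⬝ᵥ (fun i => w ⟨s, i⟩) = 0)
    (hw : (fromCols (blockDiagonal' D) (0 : Matrix (Σ s, κ s) ν K))ᴴ *ᵥ w = 0) : w = 0 := by
  rw [conjTranspose_fromCols_eq_fromRows_conjTranspose, fromRows_mulVec,
    ← Sum.elim_zero_zero, Sum.elim_eq_iff, blockDiagonal'_conjTranspose,
    blockDiagonal'_mulVec_eq_zero_iff] at hw
  have hblock (s : ι) : (fun i => w ⟨s, i⟩) = 0 :=
    eq_zero_of_mem_span_singleton_of_dotProduct_eq_zero (hpe s) (hker s (hw.1 s)) (hpw s)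
  exact funext fun ⟨s, i⟩ => congrFun (hblock s) i

theorem stmt2_general [Field K] [PartialOrder K] [StarRing K] [Fintype ν] [DecidableEq ν]
    [∀ s, Fintype (τ s)] [∀ s, DecidableEq (τ s)]
    {M : ∀ s, Matrix (κ s) (κ s) K} {D : ∀ s, Matrix (κ s) (τ s) K} {e : ∀ s, κ s → K}
    (hM : ∀ s, (M s).IsHermitian) (hMe : ∀ s, star (e s) ⬝ᵥ M s *ᵥ e s ≠ 0)
    (hker : ∀ s, LinearMap.ker (D s)ᴴ.mulVecLin ≤ Submodule.span K {e s})
    {A : Matrix ((Σ s, τ s) ⊕ ν) ((Σ s, τ s) ⊕ ν) K} (hA : A.PosDef)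
    {B : Matrix (Σ s, κ s) ((Σ s, τ s) ⊕ ν) K} (hB : B = fromCols (blockDiagonal' D) 0)
    {S Q : Matrix (Σ s, κ s) (Σ s, κ s) K} (hS : S = B * A⁻¹ * Bᴴ) {c : ι → K}
    (hQ : Q = blockDiagonal' fun s => c s • vecMulVec (M s *ᵥ e s) (star (M s *ᵥ e s)))
    {r μ : K} (hμ : μ ≠ 1) {v : (Σ s, τ s) ⊕ ν → K} {w : (Σ s, κ s) → K}
    (hvw : Sum.elim v w ≠ 0)
    (heig : fromBlocks A Bᴴ B (-(r • S) - Q) *ᵥ Sum.elim v w =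
      μ • fromBlocks A 0 0 (S + Q) *ᵥ Sum.elim v w)
    (horth : ∀ s, star (e s) ⬝ᵥ M s *ᵥ (fun i => w ⟨s, i⟩) = 0) :
    μ ^ 2 + (r - 1) * μ - (1 + r) = 0 := by
  simp only [← star_mulVec_dotProduct_of_isHermitian (hM _)] at hMe horth
  have hQw : Q *ᵥ w = 0 := by
    rw [hQ, blockDiagonal'_mulVec_eq_zero_iff]
    intro s
    rw [smul_mulVec, vecMulVec_mulVec, horth s, MulOpposite.op_zero, zero_smul, smul_zero]
  obtain ⟨hBw, hBv⟩ := (fromBlocks_mulVec_elim_eq_smul_iff hQw).mp heig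
  have hinj : Bᴴ *ᵥ w = 0 → w = 0 := fun hw =>
    eq_zero_of_conjTranspose_fromCols_mulVec_eq_zero hker hMe horth (hB ▸ hw)
  have hSw : (B * A⁻¹ * Bᴴ) *ᵥ w ≠ 0 :=
    schur_mulVec_ne_zero_of_posDef hA (sub_ne_zero.mpr hμ) hvw hBw hinj
  exact sq_add_mul_sub_eq_zero_of_schur_mulVec_ne_zero hA.isUnit hBw (hS ▸ hBv) hSw

end BlockPencil

lemma eq_or_eq_of_sq_add_mul_sub_eq_zero {r μ : ℝ} (h : μ ^ 2 + (r - 1) * μ - (1 + r) = 0) :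
    μ = ((1 - r) - √((1 - r) ^ 2 + 4 * (1 + r))) / 2 ∨
      μ = ((1 - r) + √((1 - r) ^ 2 + 4 * (1 + r))) / 2 := by
  have hnonneg : 0 ≤ (1 - r) ^ 2 + 4 * (1 + r) := by linarith [sq_nonneg (1 + r)]
  have hdiscrim : discrim 1 (r - 1) (-(1 + r)) =
      √((1 - r) ^ 2 + 4 * (1 + r)) * √((1 - r) ^ 2 + 4 * (1 + r)) := by
    rw [Real.mul_self_sqrt hnonneg, discrim]
    ring
  have hroots := (quadratic_eq_zero_iff one_ne_zero hdiscrim μ).mp (by linear_combination h)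
  simpa only [neg_sub, mul_one] using hroots.symm

lemma onesV_ne_zero {k : ℕ} (hk : 0 < k) : onesV k ≠ 0 :=
  fun h => one_ne_zero (congrFun h ⟨0, hk⟩)

/-- the nontrivial eigenvalues of the pencil `(Ǎ, H₀⁻¹)`, with eigenvectors whose
second component is M-orthogonal to the kernels, satisfy `μ² + (r−1)μ − (1+r) = 0`. -/
theorem stmt2
    (m : ℕ) (hm : 1 ≤ m) (ns : Fin m → ℕ) (hns : ∀ s, 0 < ns s)
    (M Bb : ∀ s : Fin m, Matrix (Fin (ns s)) (Fin (ns s)) ℝ)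
    (hM : ∀ s, (M s).PosDef) (hBb : ∀ s, (Bb s).PosSemidef)
    (hker : ∀ s, LinearMap.ker (Bb s).mulVecLin = Submodule.span ℝ {onesV (ns s)})
    (n0 : ℕ) (hn0 : 1 ≤ n0)
    (A : Matrix ((Σ s, Fin (ns s)) ⊕ Fin n0) ((Σ s, Fin (ns s)) ⊕ Fin n0) ℝ)
    (hA : A.PosDef)
    (BD Q : Matrix (Σ s, Fin (ns s)) (Σ s, Fin (ns s)) ℝ)
    (hBD : BD = blockDiagonal' Bb)
    (hQ : Q = blockDiagonal' fun s => Qblk (M s))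
    (B : Matrix (Σ s, Fin (ns s)) ((Σ s, Fin (ns s)) ⊕ Fin n0) ℝ)
    (hB : B = fromCols BD 0)
    (S0 : Matrix (Σ s, Fin (ns s)) (Σ s, Fin (ns s)) ℝ)
    (hS0 : S0 = B * A⁻¹ * Bᵀ)
    (r : ℝ) (hr : 0 ≤ r)
    (v : ((Σ s, Fin (ns s)) ⊕ Fin n0) → ℝ) (w : (Σ s, Fin (ns s)) → ℝ)
    (hvw : Sum.elim v w ≠ 0)
    (μ : ℝ) (hμ : μ ≠ 1)
    (heig : (fromBlocks A Bᵀ B (-(r • S0) - Q)).mulVec (Sum.elim v w)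
            = μ • (fromBlocks A 0 0 (S0 + Q)).mulVec (Sum.elim v w))
    (horth : ∀ s : Fin m, onesV (ns s) ⬝ᵥ (M s).mulVec (fun i => w ⟨s, i⟩) = 0) :
    μ ^ 2 + (r - 1) * μ - (1 + r) = 0 ∧
      (μ = ((1 - r) - Real.sqrt ((1 - r) ^ 2 + 4 * (1 + r))) / 2 ∨
       μ = ((1 - r) + Real.sqrt ((1 - r) ^ 2 + 4 * (1 + r))) / 2) := by
  have hquad : μ ^ 2 + (r - 1) * μ - (1 + r) = 0 :=
    stmt2_general (fun s => (hM s).isHermitian)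
      (fun s => ((hM s).dotProduct_mulVec_pos (onesV_ne_zero (hns s))).ne')
      (fun s => by rw [(hBb s).isHermitian.eq, hker s]) hA (hBD ▸ hB) hS0 hQ hμ hvw heig horth
  exact ⟨hquad, eq_or_eq_of_sq_add_mul_sub_eq_zero hquad⟩
end

section
/- Under the block setup, let A be a real symmetric positive definite N×N matrix in block form A = [[A_DD, A_D0],[A_0D, A_00]] with A_DD of size n×n (N = n + n_0, n_0 ≥ 1), and let C > 0. Assume that for every x ∈ R^n there exists v ∈ R^{n_0} such that (x,v)ᵀ A (x,v) ≤ xᵀ B_D x + C²·xᵀ(B_D + Q)x. Then, with S_00 = A_DD − A_D0 A_00^{−1} A_0D and S_0 = B_D S_00^{−1} B_D, one has B_D ≼ (1+C²)·S_0 in the Loewner order. -/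
open Matrix

/-!
Since `ker B_D` and `ker Q` together span the whole space, every `x` may be replaced by some
`y ∈ ker Q` with `B_D y = B_D x`. Both quadratic forms in `B_D ≼ (1 + C²) S_0` depend only on
`B_D x`, so it suffices to compare them at `y`, where the `Q`-term of the extension estimate
vanishes. Minimizing that estimate over `v` bounds the Schur complement,
`yᵀ S_00 y ≤ (1 + C²) yᵀ B_D y`, and the Fenchel–Young inequality `2 yᵀ z ≤ yᵀ S y + zᵀ S⁻¹ z` with
`S = (1 + C²)⁻¹ S_00` and `z = B_D y` turns this upper bound for `S_00` into the lower bound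
for `S_0`.
-/

section Kernels

variable {o : Type*} {m' n' : o → Type*} [Fintype o] [DecidableEq o] [∀ s, Fintype (n' s)]
  {R : Type*}

theorem blockDiagonal'_mulVec_apply_s16 [NonUnitalNonAssocSemiring R]
    (F : ∀ s, Matrix (m' s) (n' s) R) (x : (Σ s, n' s) → R) (p : Σ s, m' s) :
    (blockDiagonal' F *ᵥ x) p = (F p.1 *ᵥ fun j ↦ x ⟨p.1, j⟩) p.2 := by
  obtain ⟨s, i⟩ := p
  simp only [mulVec, dotProduct, Fintype.sum_sigma]
  rw [Finset.sum_eq_single_of_mem s (Finset.mem_univ s)]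
  · simp only [blockDiagonal'_apply_eq]
  · intro t _ hts
    simp only [blockDiagonal'_apply_ne F i _ hts.symm, zero_mul, Finset.sum_const_zero]

theorem mem_ker_blockDiagonal'_mulVecLin [CommSemiring R] {F : ∀ s, Matrix (m' s) (n' s) R}
    {x : (Σ s, n' s) → R} :
    x ∈ LinearMap.ker (blockDiagonal' F).mulVecLin ↔
      ∀ s, (fun j ↦ x ⟨s, j⟩) ∈ LinearMap.ker (F s).mulVecLin := by
  simp only [LinearMap.mem_ker, mulVecLin_apply, funext_iff, blockDiagonal'_mulVec_apply_s16,
    Pi.zero_apply, Sigma.forall]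

theorem codisjoint_ker_blockDiagonal' [CommSemiring R] {l' : o → Type*}
    {F : ∀ s, Matrix (m' s) (n' s) R} {G : ∀ s, Matrix (l' s) (n' s) R}
    (h : ∀ s, Codisjoint (LinearMap.ker (F s).mulVecLin) (LinearMap.ker (G s).mulVecLin)) :
    Codisjoint (LinearMap.ker (blockDiagonal' F).mulVecLin)
      (LinearMap.ker (blockDiagonal' G).mulVecLin) := by
  simp only [Submodule.codisjoint_iff_exists_add_eq] at h ⊢
  intro x
  choose y z hy hz hyz using fun s ↦ h s fun j ↦ x ⟨s, j⟩
  exact ⟨fun p ↦ y p.1 p.2, fun p ↦ z p.1 p.2, mem_ker_blockDiagonal'_mulVecLin.2 hy,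
    mem_ker_blockDiagonal'_mulVecLin.2 hz, funext fun p ↦ congrFun (hyz p.1) p.2⟩

theorem codisjoint_span_singleton_ker_vecMulVec {ι κ K : Type*} [Fintype κ] [Field K]
    (u : ι → K) {v e : κ → K} (h : v ⬝ᵥ e ≠ 0) :
    Codisjoint (Submodule.span K {e}) (LinearMap.ker (vecMulVec u v).mulVecLin) := by
  have hv : Codisjoint (Submodule.span K {e}) (LinearMap.ker (dotProductBilin K K v)) :=
    codisjoint_iff.2 ((dotProductBilin K K v).span_singleton_sup_ker_eq_top h)
  refine hv.mono_right fun x hx ↦ ?_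
  have hx : v ⬝ᵥ x = 0 := hx
  simp [vecMulVec_mulVec, hx]

theorem codisjoint_ker_ker_Qblk {k : ℕ} {B M : Matrix (Fin k) (Fin k) ℝ}
    (hB : Submodule.span ℝ {onesV k} ≤ LinearMap.ker B.mulVecLin)
    (hM : onesV k ⬝ᵥ M *ᵥ onesV k ≠ 0) :
    Codisjoint (LinearMap.ker B.mulVecLin) (LinearMap.ker (Qblk M).mulVecLin) := by
  have h := codisjoint_span_singleton_ker_vecMulVec
    ((onesV k ⬝ᵥ M *ᵥ onesV k)⁻¹ • M *ᵥ onesV k) ((dotProduct_comm _ _).trans_ne hM)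
  rw [smul_vecMulVec] at h
  exact h.mono_left hB

theorem onesV_dotProduct_mulVec_onesV_pos {k : ℕ} (hk : 0 < k) {M : Matrix (Fin k) (Fin k) ℝ}
    (hM : M.PosDef) : 0 < onesV k ⬝ᵥ M *ᵥ onesV k := by
  have hne : onesV k ≠ 0 := fun h ↦ one_ne_zero (congrFun h ⟨0, hk⟩)
  simpa only [star_trivial] using hM.dotProduct_mulVec_pos hne

end Kernels

section SchurComplement

variable {ι κ R : Type*} [Fintype κ] [DecidableEq κ] [Field R] [PartialOrder R] [StarRing R]

theorem star_dotProduct_fromBlocks_mulVec [Fintype ι] (A : Matrix ι ι R) (B : Matrix ι κ R)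
    {D : Matrix κ κ R} (hD : D.PosDef) (x : ι → R) (v : κ → R) :
    star (Sum.elim x v) ⬝ᵥ fromBlocks A B Bᴴ D *ᵥ Sum.elim x v =
      star ((D⁻¹ * Bᴴ) *ᵥ x + v) ⬝ᵥ D *ᵥ ((D⁻¹ * Bᴴ) *ᵥ x + v) +
        star x ⬝ᵥ (A - B * D⁻¹ * Bᴴ) *ᵥ x := by
  let _ := hD.isUnit.invertible
  simpa only [dotProduct_mulVec] using schur_complement_eq₂₂ A B x v hD.isHermitian

theorem posDef_schur_complement [Finite ι] {A : Matrix ι ι R} {B : Matrix ι κ R} {D : Matrix κ κ R}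
    (h : (fromBlocks A B Bᴴ D).PosDef) : (A - B * D⁻¹ * Bᴴ).PosDef := by
  have := Fintype.ofFinite ι
  have hD : D.PosDef := h.submatrix Sum.inr_injective
  refine .of_dotProduct_mulVec_pos ((IsHermitian.fromBlocks₂₂ A B hD.isHermitian).1 h.isHermitian)
    fun x hx ↦ ?_
  have hne : Sum.elim x (-((D⁻¹ * Bᴴ) *ᵥ x)) ≠ 0 :=
    fun h0 ↦ hx (funext fun i ↦ congrFun h0 (Sum.inl i))
  have hpos := h.dotProduct_mulVec_pos hne
  rwa [star_dotProduct_fromBlocks_mulVec A B hD, add_neg_cancel, mulVec_zero, dotProduct_zero,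
    zero_add] at hpos

theorem star_dotProduct_schur_complement_mulVec_le [Fintype ι] [StarOrderedRing R]
    (A : Matrix ι ι R) (B : Matrix ι κ R) {D : Matrix κ κ R} (hD : D.PosDef) (x : ι → R)
    (v : κ → R) :
    star x ⬝ᵥ (A - B * D⁻¹ * Bᴴ) *ᵥ x ≤
      star (Sum.elim x v) ⬝ᵥ fromBlocks A B Bᴴ D *ᵥ Sum.elim x v := by
  rw [star_dotProduct_fromBlocks_mulVec A B hD]
  exact le_add_of_nonneg_left (hD.posSemidef.dotProduct_mulVec_nonneg _)

end SchurComplement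

section LoewnerOrder

theorem star_dotProduct_mulVec_of_isHermitian {ι R : Type*} [Fintype ι]
    [NonUnitalSemiring R] [StarRing R] {B : Matrix ι ι R} (hB : B.IsHermitian) (x y : ι → R) :
    star x ⬝ᵥ B *ᵥ y = star (B *ᵥ x) ⬝ᵥ y := by
  rw [star_mulVec, hB.eq, dotProduct_mulVec]

variable {ι K : Type*} [Fintype ι] [DecidableEq ι] [Field K] [PartialOrder K] [StarRing K]
  [StarOrderedRing K] {S B : Matrix ι ι K} {W : Submodule K (ι → K)}

theorem star_dotProduct_add_star_dotProduct_le (hS : S.PosDef) (y z : ι → K) :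
    star y ⬝ᵥ z + star z ⬝ᵥ y ≤ star y ⬝ᵥ S *ᵥ y + star z ⬝ᵥ S⁻¹ *ᵥ z := by
  have hSz : S *ᵥ S⁻¹ *ᵥ z = z := by
    rw [mulVec_mulVec, mul_nonsing_inv _ ((isUnit_iff_isUnit_det S).1 hS.isUnit), one_mulVec]
  have hnonneg := hS.posSemidef.dotProduct_mulVec_nonneg (y - S⁻¹ *ᵥ z)
  have hexpand : star (y - S⁻¹ *ᵥ z) ⬝ᵥ S *ᵥ (y - S⁻¹ *ᵥ z) =
      star y ⬝ᵥ S *ᵥ y + star z ⬝ᵥ S⁻¹ *ᵥ z - (star y ⬝ᵥ z + star z ⬝ᵥ y) := by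
    rw [mulVec_sub, hSz, star_sub, sub_dotProduct, dotProduct_sub, dotProduct_sub,
      star_dotProduct_mulVec_of_isHermitian hS.isHermitian (S⁻¹ *ᵥ z), hSz,
      ← star_dotProduct_mulVec_of_isHermitian hS.inv.isHermitian z z]
    ring
  exact sub_nonneg.1 (hexpand ▸ hnonneg)

theorem posSemidef_mul_inv_mul_sub_self (hS : S.PosDef) (hB : B.IsHermitian)
    (hW : Codisjoint (LinearMap.ker B.mulVecLin) W)
    (hle : ∀ y ∈ W, star y ⬝ᵥ S *ᵥ y ≤ star y ⬝ᵥ B *ᵥ y) :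
    (B * S⁻¹ * B - B).PosSemidef := by
  have hherm : (B * S⁻¹ * B).IsHermitian := by
    simpa only [hB.eq] using isHermitian_conjTranspose_mul_mul B hS.inv.isHermitian
  refine .of_dotProduct_mulVec_nonneg (hherm.sub hB) fun x ↦ ?_
  obtain ⟨u, y, hu, hy, rfl⟩ := Submodule.codisjoint_iff_exists_add_eq.1 hW x
  have hBu : B *ᵥ u = 0 := hu
  have hBuy : B *ᵥ (u + y) = B *ᵥ y := by rw [mulVec_add, hBu, zero_add]
  have hfenchel := star_dotProduct_add_star_dotProduct_le hS y (B *ᵥ y)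
  rw [← star_dotProduct_mulVec_of_isHermitian hB y y] at hfenchel
  have hlower : star y ⬝ᵥ B *ᵥ y ≤ star (B *ᵥ y) ⬝ᵥ S⁻¹ *ᵥ B *ᵥ y :=
    le_of_add_le_add_left (hfenchel.trans (add_le_add_left (hle y hy) _))
  calc 0 ≤ star (B *ᵥ y) ⬝ᵥ S⁻¹ *ᵥ B *ᵥ y - star y ⬝ᵥ B *ᵥ y := sub_nonneg.2 hlower
    _ = star (u + y) ⬝ᵥ (B * S⁻¹ * B - B) *ᵥ (u + y) := by
      rw [sub_mulVec, dotProduct_sub, ← mulVec_mulVec, ← mulVec_mulVec, hBuy,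
        star_dotProduct_mulVec_of_isHermitian hB (u + y), hBuy,
        star_dotProduct_mulVec_of_isHermitian hB (u + y), hBuy,
        star_dotProduct_mulVec_of_isHermitian hB y]

theorem posSemidef_smul_mul_inv_mul_sub_self (hS : S.PosDef) (hB : B.IsHermitian)
    (hW : Codisjoint (LinearMap.ker B.mulVecLin) W) {k : K} (hk : 0 < k)
    (hle : ∀ y ∈ W, star y ⬝ᵥ S *ᵥ y ≤ k * (star y ⬝ᵥ B *ᵥ y)) :
    (k • (B * S⁻¹ * B) - B).PosSemidef := by
  have hk' : 0 < k⁻¹ := by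
    simpa only [star_inv₀, hk.le.star_eq, inv_mul_cancel₀ hk.ne', one_mul] using
      star_left_conjugate_pos hk (IsRegular.of_ne_zero (inv_ne_zero hk.ne'))
  have hinv : (k⁻¹ • S)⁻¹ = k • S⁻¹ := by
    simpa only [Units.smul_def, Units.val_inv_eq_inv_val, Units.val_mk0, inv_inv] using
      inv_smul' S (Units.mk0 k hk.ne')⁻¹ ((isUnit_iff_isUnit_det S).1 hS.isUnit)
  have hle' (y) (hy : y ∈ W) : star y ⬝ᵥ (k⁻¹ • S) *ᵥ y ≤ star y ⬝ᵥ B *ᵥ y := by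
    simpa only [smul_mulVec, dotProduct_smul, smul_eq_mul, inv_mul_cancel_left₀ hk.ne'] using
      smul_le_smul_of_nonneg_left (hle y hy) hk'.le
  simpa only [hinv, Matrix.mul_smul, Matrix.smul_mul] using
    posSemidef_mul_inv_mul_sub_self (hS.smul hk') hB hW hle'

theorem stmt16_general {κ : Type*} [Fintype κ] [DecidableEq κ] {Q : Matrix ι ι K}
    (hB : B.IsHermitian)
    (hBQ : Codisjoint (LinearMap.ker B.mulVecLin) (LinearMap.ker Q.mulVecLin))
    {ADD : Matrix ι ι K} {AD0 : Matrix ι κ K} {A0D : Matrix κ ι K} {A00 : Matrix κ κ K}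
    (hA : (fromBlocks ADD AD0 A0D A00).PosDef) {c : K} (hc : 0 < 1 + c)
    (hext : ∀ x, ∃ v, star (Sum.elim x v) ⬝ᵥ fromBlocks ADD AD0 A0D A00 *ᵥ Sum.elim x v ≤
      star x ⬝ᵥ B *ᵥ x + c * (star x ⬝ᵥ (B + Q) *ᵥ x)) :
    ((1 + c) • (B * (ADD - AD0 * A00⁻¹ * A0D)⁻¹ * B) - B).PosSemidef := by
  obtain ⟨-, rfl, -, -⟩ := isHermitian_fromBlocks_iff.1 hA.isHermitian
  have hA00 : A00.PosDef := hA.submatrix Sum.inr_injective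
  refine posSemidef_smul_mul_inv_mul_sub_self (posDef_schur_complement hA) hB hBQ hc
    fun y hy ↦ ?_
  have hQy : Q *ᵥ y = 0 := hy
  obtain ⟨v, hv⟩ := hext y
  calc star y ⬝ᵥ (ADD - AD0 * A00⁻¹ * AD0ᴴ) *ᵥ y
      ≤ star (Sum.elim y v) ⬝ᵥ fromBlocks ADD AD0 AD0ᴴ A00 *ᵥ Sum.elim y v :=
        star_dotProduct_schur_complement_mulVec_le ADD AD0 hA00 y v
    _ ≤ star y ⬝ᵥ B *ᵥ y + c * (star y ⬝ᵥ (B + Q) *ᵥ y) := hv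
    _ = (1 + c) * (star y ⬝ᵥ B *ᵥ y) := by rw [add_mulVec, hQy, add_zero, one_add_mul]

end LoewnerOrder

/-- under the discrete extension estimate, `B_D ≼ (1+C²)·S_0` in the Loewner
order, where `S_0 = B_D S_00⁻¹ B_D`. -/
theorem stmt16
    (m : ℕ) (hm : 1 ≤ m) (ns : Fin m → ℕ) (hns : ∀ s, 0 < ns s)
    (M Bb : ∀ s : Fin m, Matrix (Fin (ns s)) (Fin (ns s)) ℝ)
    (hM : ∀ s, (M s).PosDef) (hBb : ∀ s, (Bb s).PosSemidef)
    (hker : ∀ s, LinearMap.ker (Bb s).mulVecLin = Submodule.span ℝ {onesV (ns s)})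
    (BD Q : Matrix (Σ s, Fin (ns s)) (Σ s, Fin (ns s)) ℝ)
    (hBD : BD = blockDiagonal' Bb)
    (hQ : Q = blockDiagonal' fun s => Qblk (M s))
    (n0 : ℕ) (hn0 : 1 ≤ n0)
    (ADD : Matrix (Σ s, Fin (ns s)) (Σ s, Fin (ns s)) ℝ)
    (AD0 : Matrix (Σ s, Fin (ns s)) (Fin n0) ℝ)
    (A0D : Matrix (Fin n0) (Σ s, Fin (ns s)) ℝ)
    (A00 : Matrix (Fin n0) (Fin n0) ℝ)
    (hA : (fromBlocks ADD AD0 A0D A00).PosDef)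
    (C : ℝ) (hC : 0 < C)
    (hext : ∀ x : (Σ s, Fin (ns s)) → ℝ, ∃ v : Fin n0 → ℝ,
      Sum.elim x v ⬝ᵥ (fromBlocks ADD AD0 A0D A00).mulVec (Sum.elim x v) ≤
        x ⬝ᵥ BD.mulVec x + C ^ 2 * (x ⬝ᵥ (BD + Q).mulVec x)) :
    ((1 + C ^ 2) • (BD * (ADD - AD0 * A00⁻¹ * A0D)⁻¹ * BD) - BD).PosSemidef := by
  subst hBD hQ
  exact stmt16_general (isHermitian_blockDiagonal'_iff.2 fun s ↦ (hBb s).isHermitian)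
    (codisjoint_ker_blockDiagonal' fun s ↦ codisjoint_ker_ker_Qblk (hker s).ge
      (onesV_dotProduct_mulVec_onesV_pos (hns s) (hM s)).ne') hA (by positivity) hext
end
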